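/- Let m, n be positive integers, let G ∈ ℝ^{m×n} be nonzero, and let U ∈ ℝ^{m×n} have i.i.d. standard Gaussian entries. Then the expected cosine similarity of the noiseless MeZO estimator ⟨G, U⟩_F · U with G satisfies E_U[ |⟨U, G⟩_F| / (‖U‖_F · ‖G‖_F) ] = β_{mn}, where the integrand is defined to be 0 when U = 0. -/

import Mathlib

open MeasureTheory ProbabilityTheory Matrix Real

attribute [local instance] Matrix.frobeniusNormedAddCommGroup Matrix.frobeniusNormedSpace

noncomputable section

/-- Frobenius inner product `⟨X,Y⟩_F = tr(XᵀY)`. -/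
def frobInner {ι κ : Type*} [Fintype ι] [Fintype κ]
    (X Y : Matrix ι κ ℝ) : ℝ := (Xᵀ * Y).trace

/-- The product of standard Gaussian measures over all entries of an `m × n` matrix
(i.i.d. standard Gaussian entries). -/
def gaussMat (m n : ℕ) : Measure (Fin m → Fin n → ℝ) :=
  Measure.pi fun _ => Measure.pi fun _ => gaussianReal 0 1

/-- `β_D = Γ(D/2)/(√π·Γ((D+1)/2))`. -/
def beta (D : ℕ) : ℝ :=
  Real.Gamma (D / 2) / (Real.sqrt π * Real.Gamma ((D + 1) / 2))

lemma polar_aux {E : Type*} [NormedAddCommGroup E] [NormedSpace ℝ E] [MeasurableSpace E]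
    [Nontrivial E] (μ : Measure E) [FiniteDimensional ℝ E] [BorelSpace E] [μ.IsAddHaarMeasure]
    (h : E → ℝ) (hh : ∀ c : ℝ, 0 < c → ∀ x, h (c • x) = h x) (f : ℝ → ℝ) :
    ∫ x, h x * f ‖x‖ ∂μ = (∫ s : Metric.sphere (0 : E) 1, h s ∂μ.toSphere) *
      ∫ y in Set.Ioi (0 : ℝ), y ^ (Module.finrank ℝ E - 1) * f y :=
  calc
    ∫ x, h x * f ‖x‖ ∂μ = ∫ x : ({(0)}ᶜ : Set E), h x.1 * f (‖x.1‖) ∂(μ.comap (↑)) := by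
      rw [integral_subtype_comap (measurableSet_singleton _).compl fun x ↦ h x * f (‖x‖),
        restrict_compl_singleton]
    _ = ∫ x, h x.1 * f x.2 ∂μ.toSphere.prod (.volumeIoiPow (Module.finrank ℝ E - 1)) := by
      rw [← μ.measurePreserving_homeomorphUnitSphereProd.integral_comp
        (Homeomorph.measurableEmbedding _)]
      refine integral_congr_ae (.of_forall fun x => ?_)
      have hx : 0 < ‖x.1‖ := norm_pos_iff.2 x.2
      simp [hh _ (inv_pos.2 hx)]
    _ = (∫ s : Metric.sphere (0 : E) 1, h s ∂μ.toSphere) *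
          ∫ x : Set.Ioi (0 : ℝ), f x ∂.volumeIoiPow (Module.finrank ℝ E - 1) :=
      integral_prod_mul (fun s : Metric.sphere (0 : E) 1 => h s) (fun x : Set.Ioi (0:ℝ) => f x)
    _ = _ := by
      congr 1
      simp only [Measure.volumeIoiPow, ENNReal.ofReal]
      rw [integral_withDensity_eq_integral_smul, ← integral_subtype_comap measurableSet_Ioi fun a ↦ a ^ (Module.finrank ℝ E - 1) * f a]
      · refine integral_congr_ae (.of_forall fun x => ?_)
        have : 0 < x.1 := x.2
        simp [NNReal.smul_def, this.le]
      · exact (measurable_subtype_coe.pow_const _).real_toNNReal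

lemma pi_gauss {ι : Type*} [Fintype ι] :
    (Measure.pi fun _ : ι => gaussianReal 0 1) =
      (volume : Measure (ι → ℝ)).withDensity
        fun x => ENNReal.ofReal (∏ i, gaussianPDFReal 0 1 (x i)) := by
  classical
  refine (Measure.pi_eq fun s hs => ?_)
  rw [withDensity_apply _ (MeasurableSet.univ_pi hs)]
  have hi : Integrable (fun x : ι → ℝ => ∏ i, gaussianPDFReal 0 1 (x i)) :=
    Integrable.fintype_prod (f := fun _ => gaussianPDFReal 0 1)
      fun i => integrable_gaussianPDFReal 0 1
  rw [← ofReal_integral_eq_lintegral_ofReal hi.integrableOn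
    (.of_forall fun x => Finset.prod_nonneg fun i _ => gaussianPDFReal_nonneg _ _ _)]
  simp_rw [gaussianReal_apply_eq_integral 0 (one_ne_zero) _]
  rw [← ENNReal.ofReal_prod_of_nonneg
    fun i _ => integral_nonneg fun x => gaussianPDFReal_nonneg _ _ _]
  congr 1
  rw [← integral_indicator (MeasurableSet.univ_pi hs)]
  simp_rw [← integral_indicator (hs _)]
  rw [← integral_fintype_prod_volume_eq_prod]
  congr 1
  ext x
  by_cases hx : x ∈ Set.univ.pi s
  · rw [Set.indicator_of_mem hx]
    exact Finset.prod_congr rfl fun i _ => (Set.indicator_of_mem (hx i trivial) _).symm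
  · rw [Set.indicator_of_notMem hx]
    simp only [Set.mem_pi, Set.mem_univ, true_implies, not_forall] at hx
    obtain ⟨i, hi⟩ := hx
    exact (Finset.prod_eq_zero (Finset.mem_univ i) (Set.indicator_of_notMem hi _)).symm

lemma int_std {ι : Type*} [Fintype ι] (f : EuclideanSpace ℝ ι → ℝ) :
    ∫ x, f x ∂(stdGaussian (EuclideanSpace ℝ ι)) =
      (√(2 * π))⁻¹ ^ Fintype.card ι * ∫ x, f x * rexp (-(1/2) * ‖x‖ ^ (2:ℝ)) := by
  rw [← map_pi_eq_stdGaussian]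
  change ∫ x, f x ∂(Measure.map (MeasurableEquiv.toLp 2 (ι → ℝ)) _) = _
  rw [integral_map_equiv, pi_gauss, integral_withDensity_eq_integral_toReal_smul,
    ← (EuclideanSpace.volume_preserving_symm_measurableEquiv_toLp ι).symm.integral_comp
      (MeasurableEquiv.measurableEmbedding _), ← integral_const_mul]
  · refine integral_congr_ae (.of_forall fun x => ?_)
    simp only
    rw [ENNReal.toReal_ofReal (Finset.prod_nonneg fun i _ => gaussianPDFReal_nonneg _ _ _)]
    simp only [gaussianPDFReal, Finset.prod_mul_distrib, ← Real.exp_sum]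
    simp [EuclideanSpace.real_norm_sq_eq, Finset.mul_sum]
    have : ∑ i, -x i ^ 2 / 2 = -∑ i, 2⁻¹ * x i ^ 2 := by
      rw [← Finset.sum_neg_distrib]
      exact Finset.sum_congr rfl fun i _ => by ring
    rw [this]
    ring
  · exact (Finset.measurable_prod _ fun i _ =>
      (measurable_gaussianPDFReal 0 1).comp (measurable_pi_apply i)).ennreal_ofReal
  · exact .of_forall fun x => ENNReal.ofReal_lt_top

lemma abs_gauss : ∫ x, |x| ∂(gaussianReal 0 1) = √2 / √π := by
  rw [integral_gaussianReal_eq_integral_smul one_ne_zero]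
  have : ∀ x : ℝ, gaussianPDFReal 0 1 x • |x| = (fun y => (√(2 * π))⁻¹ * (y ^ (1:ℝ) * rexp (-(1/2) * y ^ (2:ℝ)))) |x| := by
    intro x
    simp [gaussianPDFReal]
    ring_nf
  rw [integral_congr_ae (.of_forall this),
    integral_comp_abs (f := fun y => (√(2 * π))⁻¹ * (y ^ (1:ℝ) * rexp (-(1/2) * y ^ (2:ℝ)))), integral_const_mul, integral_rpow_mul_exp_neg_mul_rpow] <;> norm_num
  have := Real.sq_sqrt (show (0:ℝ) ≤ 2 by norm_num)
  field_simp
  linarith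

lemma abs_inner {E : Type*} [NormedAddCommGroup E] [InnerProductSpace ℝ E] [MeasurableSpace E] [BorelSpace E] [FiniteDimensional ℝ E] (g : E) (hg : ‖g‖ = 1) :
    ∫ x, |inner ℝ g x| ∂(stdGaussian E) = √2 / √π := by
  have h := IsGaussian.map_eq_gaussianReal (μ := stdGaussian E) (innerSL ℝ g)
  rw [integral_strongDual_stdGaussian, variance_dual_stdGaussian, innerSL_apply_norm, hg] at h
  simp at h
  rw [← abs_gauss, ← h, integral_map]
  · fun_prop
  · fun_prop

lemma Ioi_int (k : ℕ) : ∫ y in Set.Ioi (0:ℝ), y ^ k * rexp (-(1/2) * y ^ (2:ℝ)) =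
    (1/2 : ℝ) ^ (-((k:ℝ) + 1) / 2) * (1 / 2) * Real.Gamma (((k:ℝ) + 1) / 2) := by
  rw [← integral_rpow_mul_exp_neg_mul_rpow (by norm_num)
    (by have : (0:ℝ) ≤ k := k.cast_nonneg
        linarith) (by norm_num)]
  simp only [Real.rpow_natCast]

lemma cos_main {ι : Type*} [Fintype ι] [Nonempty ι] (g : EuclideanSpace ℝ ι) (hg : ‖g‖ = 1) :
    ∫ x, |inner ℝ g x| / ‖x‖ ∂(stdGaussian (EuclideanSpace ℝ ι)) =
      Real.Gamma (Fintype.card ι / 2) / (√π * Real.Gamma ((Fintype.card ι + 1) / 2)) := by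
  have h1 := abs_inner g hg
  have hh : ∀ c : ℝ, 0 < c → ∀ x, |inner ℝ g (c • x)| / ‖c • x‖ = |inner ℝ g x| / ‖x‖ := by
    intro c hc x
    rw [inner_smul_right, abs_mul, norm_smul, Real.norm_eq_abs, mul_div_mul_left]
    exact (abs_pos.2 hc.ne').ne'
  obtain ⟨k, hk⟩ : ∃ k, Fintype.card ι = k + 1 :=
    Nat.exists_eq_succ_of_ne_zero Fintype.card_ne_zero
  have h2 : ∀ x : EuclideanSpace ℝ ι, |inner ℝ g x| * rexp (-(1/2) * ‖x‖ ^ (2:ℝ)) =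
      |inner ℝ g x| / ‖x‖ * (‖x‖ * rexp (-(1/2) * ‖x‖ ^ (2:ℝ))) := by
    intro x
    rcases eq_or_ne x 0 with rfl | hx
    · simp
    · have := norm_ne_zero_iff.2 hx
      field_simp
  rw [int_std] at h1 ⊢
  simp_rw [h2] at h1
  rw [polar_aux volume (fun x => |inner ℝ g x| / ‖x‖) hh
    (fun y => y * rexp (-(1/2) * y ^ (2:ℝ)))] at h1
  rw [polar_aux volume (fun x => |inner ℝ g x| / ‖x‖) hh
    (fun y => rexp (-(1/2) * y ^ (2:ℝ)))]
  simp_rw [← mul_assoc, ← pow_succ] at h1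
  rw [finrank_euclideanSpace, hk, Nat.add_sub_cancel] at *
  rw [Ioi_int] at *
  set S := ∫ s : Metric.sphere (0 : EuclideanSpace ℝ ι) 1, |inner ℝ g s.1| / ‖s.1‖ ∂volume.toSphere
  set c := (√(2 * π))⁻¹ ^ (k + 1)
  push_cast at *
  have hp : (1/2 : ℝ) ^ (-((k:ℝ) + 1 + 1) / 2) = (1/2 : ℝ) ^ (-((k:ℝ) + 1) / 2) * √2 := by
    rw [Real.sqrt_eq_rpow, show (2:ℝ) ^ (1/2 : ℝ) = (1/2 : ℝ) ^ (-(1/2) : ℝ) by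
      rw [Real.rpow_neg (by norm_num), one_div, Real.inv_rpow (by norm_num), inv_inv],
      ← Real.rpow_add (by norm_num)]
    congr 1; ring
  rw [hp] at h1
  have hG : 0 < Real.Gamma (((k:ℝ) + 1 + 1) / 2) := Real.Gamma_pos_of_pos (by positivity)
  have h2 : √2 ≠ 0 := by positivity
  have h3 : √π ≠ 0 := by positivity
  field_simp at h1 ⊢
  linear_combination h1

/- MAIN -/

lemma gauss_integral (m n : ℕ) (F : EuclideanSpace ℝ (Fin m × Fin n) → ℝ) :
    ∫ ω, F (WithLp.toLp 2 fun p => ω p.1 p.2) ∂(gaussMat m n) =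
      ∫ x, F x ∂(stdGaussian (EuclideanSpace ℝ (Fin m × Fin n))) := by
  have h := Measure.infinitePi_map_curry_symm
    (fun (_ : Fin m) (_ : Fin n) => gaussianReal 0 1)
  simp only [Measure.infinitePi_eq_pi] at h
  rw [← map_pi_eq_stdGaussian, ← h]
  change _ = ∫ x, F x ∂(Measure.map (MeasurableEquiv.toLp 2 (Fin m × Fin n → ℝ)) _)
  rw [integral_map_equiv, integral_map_equiv]
  rfl

/-- the expected cosine similarity of the noiseless MeZO estimator
`⟨G,U⟩_F·U` with `G` satisfies `E_U[|⟨U,G⟩_F|/(‖U‖_F‖G‖_F)] = β_{mn}`. -/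
theorem mezo_expected_cosine (m n : ℕ) (hm : 0 < m) (hn : 0 < n)
    (G : Matrix (Fin m) (Fin n) ℝ) (hG : G ≠ 0) :
    (∫ ω, |frobInner (Matrix.of ω) G| / (‖Matrix.of (m := Fin m) (n := Fin n) ω‖ * ‖G‖)
        ∂(gaussMat m n))
      = _root_.beta (m * n) := by
  have : Nonempty (Fin m × Fin n) := ⟨(⟨0, hm⟩, ⟨0, hn⟩)⟩
  have hnorm : ∀ A : Matrix (Fin m) (Fin n) ℝ,
      ‖A‖ = ‖(WithLp.toLp 2 fun p => A p.1 p.2 : EuclideanSpace ℝ (Fin m × Fin n))‖ := by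
    intro A
    rw [Matrix.frobenius_norm_def, EuclideanSpace.norm_eq, Real.sqrt_eq_rpow,
      Fintype.sum_prod_type]
    simp
  have hG' : ‖G‖ ≠ 0 := norm_ne_zero_iff.2 hG
  set g : EuclideanSpace ℝ (Fin m × Fin n) := ‖G‖⁻¹ • WithLp.toLp 2 fun p => G p.1 p.2 with hgdef
  have hg : ‖g‖ = 1 := by
    rw [hgdef, norm_smul, ← hnorm, norm_inv, norm_norm, inv_mul_cancel₀ hG']
  have key := cos_main g hg
  rw [← gauss_integral] at key
  simp only [Fintype.card_prod, Fintype.card_fin] at key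
  rw [_root_.beta, ← key]
  refine integral_congr_ae (.of_forall fun ω => ?_)
  have hin : frobInner (Matrix.of ω) G = inner ℝ (WithLp.toLp 2 fun p => G p.1 p.2 :
      EuclideanSpace ℝ (Fin m × Fin n)) (WithLp.toLp 2 fun p => ω p.1 p.2) := by
    rw [frobInner, PiLp.inner_apply, Fintype.sum_prod_type, Finset.sum_comm]
    simp [Matrix.trace, Matrix.mul_apply]
  simp only
  rw [hin, hnorm (Matrix.of ω), hgdef, real_inner_smul_left, abs_mul, abs_inv, abs_norm]
  simp only [Matrix.of_apply]
  rw [mul_comm ‖_‖ ‖G‖, ← div_div, div_eq_inv_mul _ ‖G‖]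

end
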